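/- Let r be a ranker, a ∈ A, u ∈ A+ with a ∈ alph(u), and let u = u_- a u_+ be the a-left factorization of u. If r starts with an X-letter, then: (1) r is condensed on u_+ if and only if X_a r is condensed on u; (2) r is condensed on u_- if and only if r is defined on u_- and r is condensed on u; equivalently, if and only if r is condensed on u, r contains no occurrence of X_a or Y_a, and, writing p = X_{b_1}⋯X_{b_k} (k ≥ 1) for the initial X-block of r, the ranker X_a Y_{b_k}⋯Y_{b_1} is defined on u. If r starts with a Y-letter, then: (3) r is condensed on u_- if and only if X_a r is condensed on u; (4) r is condensed on u_+ if and only if r is defined on u_+ and r is condensed on u; equivalently, if and only if r is condensed on u and, writing p = Y_{b_1}⋯Y_{b_k} (k ≥ 1) for the initial Y-block of r, the ranker p Y_a is defined on u. -/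

import Mathlib

namespace RankerPaper

variable {A : Type*} [DecidableEq A]

/-- Letters of rankers: `X a` ("next `a` to the right") and `Y a` ("next `a` to the left"). -/
inductive RLetter (A : Type*) where
  | X : A → RLetter A
  | Y : A → RLetter A
  deriving DecidableEq

/-- Least `a`-position of `u` strictly greater than `q` (positions are 1-indexed). -/
def nextOcc (u : List A) (a : A) (q : ℕ) : Option ℕ :=
  ((List.range (u.length + 2)).filter (fun i => decide (q < i ∧ u[i-1]? = some a))).head?

/-- Greatest `a`-position of `u` strictly less than `q` (positions are 1-indexed). -/
def prevOcc (u : List A) (a : A) (q : ℕ) : Option ℕ :=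
  ((List.range (u.length + 2)).filter
    (fun i => decide (1 ≤ i ∧ i < q ∧ u[i-1]? = some a))).getLast?

/-- One evaluation step of a ranker letter from position `q`. -/
def stepR (u : List A) : RLetter A → ℕ → Option ℕ
  | .X a, q => nextOcc u a q
  | .Y a, q => prevOcc u a q

/-- Evaluation of a ranker from position `q`, processing letters left to right. -/
def evalFrom (u : List A) : List (RLetter A) → ℕ → Option ℕ
  | [], q => some q
  | z :: r, q => (stepR u z q).bind (evalFrom u r)

/-- Starting position: `0` for an `X`-letter, `|u|+1` for a `Y`-letter. -/
def startPos (u : List A) : RLetter A → ℕ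
  | .X _ => 0
  | .Y _ => u.length + 1

/-- The position `r(u)` defined by the ranker `r` on `u` (`none` if undefined;
empty rankers are considered undefined, rankers being nonempty words). -/
def evalR (u : List A) (r : List (RLetter A)) : Option ℕ :=
  match r with
  | [] => none
  | z :: t => evalFrom u (z :: t) (startPos u z)

/-- `r` is defined on `u`. -/
def Defined (u : List A) (r : List (RLetter A)) : Prop := (evalR u r).isSome

/-- The position `r(u)` (defaulting to `0` when undefined). -/
def pos (u : List A) (r : List (RLetter A)) : ℕ := (evalR u r).getD 0

/-- Do two ranker letters have the same direction? -/
def sameDir : RLetter A → RLetter A → Bool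
  | .X _, .X _ => true
  | .Y _, .Y _ => true
  | _, _ => false

/-- Number of (alternating) blocks of a ranker. -/
def numBlocks : List (RLetter A) → ℕ
  | [] => 0
  | [_] => 1
  | z :: w :: t => (if sameDir z w then 0 else 1) + numBlocks (w :: t)

def startsX (r : List (RLetter A)) : Prop := ∃ a t, r = RLetter.X a :: t
def startsY (r : List (RLetter A)) : Prop := ∃ a t, r = RLetter.Y a :: t
def endsX (r : List (RLetter A)) : Prop := ∃ a, r.getLast? = some (RLetter.X a)
def endsY (r : List (RLetter A)) : Prop := ∃ a, r.getLast? = some (RLetter.Y a)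

/-- `R^X_{m,n}`: rankers with exactly `m` blocks, depth `n`, starting with an `X`-block. -/
def RX (m n : ℕ) (r : List (RLetter A)) : Prop :=
  numBlocks r = m ∧ r.length = n ∧ startsX r

/-- `R^Y_{m,n}`: rankers with exactly `m` blocks, depth `n`, starting with a `Y`-block. -/
def RY (m n : ℕ) (r : List (RLetter A)) : Prop :=
  numBlocks r = m ∧ r.length = n ∧ startsY r

/-- `uR^X_{m,n}`. -/
def uRX (m n : ℕ) (r : List (RLetter A)) : Prop :=
  (∃ m' n', m' ≤ m ∧ n' ≤ n ∧ RX m' n' r) ∨ (∃ m' n', m' < m ∧ n' < n ∧ RY m' n' r)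

/-- `uR^Y_{m,n}`. -/
def uRY (m n : ℕ) (r : List (RLetter A)) : Prop :=
  (∃ m' n', m' ≤ m ∧ n' ≤ n ∧ RY m' n' r) ∨ (∃ m' n', m' < m ∧ n' < n ∧ RX m' n' r)

/-- `uR_{m,n} = uR^X_{m,n} ∪ uR^Y_{m,n}`. -/
def uR (m n : ℕ) (r : List (RLetter A)) : Prop := uRX m n r ∨ uRY m n r

/-- `uR^X_m = ∪_{n ≥ m} uR^X_{m,n}`. -/
def uRXm (m : ℕ) (r : List (RLetter A)) : Prop := ∃ n, m ≤ n ∧ uRX m n r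

/-- `uR^Y_m = ∪_{n ≥ m} uR^Y_{m,n}`. -/
def uRYm (m : ℕ) (r : List (RLetter A)) : Prop := ∃ n, m ≤ n ∧ uRY m n r

/-- `r = Z₁ ⋯ Z_n` is condensed on `u`: it is defined on `u` and there is a chain of
open intervals `(0;|u|+1) = (i₀;j₀) ⊃ (i₁;j₁) ⊃ ⋯ ⊃ (i_{n-1};j_{n-1}) ∋ r(u)`
updated according to the pairs `Z_ℓ Z_{ℓ+1}`. -/
def Condensed (u : List A) (r : List (RLetter A)) : Prop :=
  ∃ (p : ℕ) (i j : ℕ → ℕ),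
    evalR u r = some p ∧
    i 0 = 0 ∧ j 0 = u.length + 1 ∧
    (∀ ℓ a b, 1 ≤ ℓ → r[ℓ-1]? = some (RLetter.X a) → r[ℓ]? = some (RLetter.X b) →
        nextOcc u a (i (ℓ-1)) = some (i ℓ) ∧ j ℓ = j (ℓ-1)) ∧
    (∀ ℓ a b, 1 ≤ ℓ → r[ℓ-1]? = some (RLetter.Y a) → r[ℓ]? = some (RLetter.Y b) →
        i ℓ = i (ℓ-1) ∧ prevOcc u a (j (ℓ-1)) = some (j ℓ)) ∧
    (∀ ℓ a b, 1 ≤ ℓ → r[ℓ-1]? = some (RLetter.X a) → r[ℓ]? = some (RLetter.Y b) →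
        i ℓ = i (ℓ-1) ∧ nextOcc u a (i (ℓ-1)) = some (j ℓ)) ∧
    (∀ ℓ a b, 1 ≤ ℓ → r[ℓ-1]? = some (RLetter.Y a) → r[ℓ]? = some (RLetter.X b) →
        prevOcc u a (j (ℓ-1)) = some (i ℓ) ∧ j ℓ = j (ℓ-1)) ∧
    (∀ ℓ, 1 ≤ ℓ → ℓ < r.length →
        i (ℓ-1) ≤ i ℓ ∧ j ℓ ≤ j (ℓ-1) ∧ (i (ℓ-1) < i ℓ ∨ j ℓ < j (ℓ-1))) ∧
    i (r.length - 1) < p ∧ p < j (r.length - 1)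

/-- `u` and `v` agree on rankers from the set `R`. -/
def AgreeDef (R : List (RLetter A) → Prop) (u v : List A) : Prop :=
  ∀ r, R r → (Defined u r ↔ Defined v r)

/-- `u` and `v` agree on condensed rankers from the set `R`. -/
def AgreeCond (R : List (RLetter A) → Prop) (u v : List A) : Prop :=
  ∀ r, R r → (Condensed u r ↔ Condensed v r)

/-- `u ⊳_{m,n} v`. -/
def trir (m n : ℕ) (u v : List A) : Prop := AgreeCond (uRX m n) u v

/-- `u ⊲_{m,n} v`. -/
def tril (m n : ℕ) (u v : List A) : Prop := AgreeCond (uRY m n) u v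

/-- The alphabet (set of letters) of a word. -/
def alph (u : List A) : Finset A := u.toFinset

/-- Condition (WI 1). -/
def WI1 (m n : ℕ) (u v : List A) : Prop := AgreeDef (uR m n) u v

/-- Condition (WI 2). -/
def WI2 (m n : ℕ) (u v : List A) : Prop :=
  ∀ r r', uR m n r → uR (m-1) (n-1) r' →
    Defined u r → Defined v r → Defined u r' → Defined v r' →
    compare (pos u r) (pos u r') = compare (pos v r) (pos v r')

/-- Condition (WI 3). -/
def WI3 (m n : ℕ) (u v : List A) : Prop :=
  ∀ r r', uR m n r → uR m (n-1) r' →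
    ((endsX r ∧ endsY r') ∨ (endsY r ∧ endsX r')) →
    Defined u r → Defined v r → Defined u r' → Defined v r' →
    compare (pos u r) (pos u r') = compare (pos v r) (pos v r')

/-- Condition (WI 1c). -/
def WI1c (m n : ℕ) (u v : List A) : Prop := AgreeCond (uR m n) u v

/-- Condition (WI 2c). -/
def WI2c (m n : ℕ) (u v : List A) : Prop :=
  ∀ r r', uR m n r → uR (m-1) (n-1) r' →
    Condensed u r → Condensed v r → Condensed u r' → Condensed v r' →
    compare (pos u r) (pos u r') = compare (pos v r) (pos v r')

/-- Condition (WI 3c). -/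
def WI3c (m n : ℕ) (u v : List A) : Prop :=
  ∀ r r', uR m n r → uR m (n-1) r' →
    ((endsX r ∧ endsY r') ∨ (endsY r ∧ endsX r')) →
    Condensed u r → Condensed v r → Condensed u r' → Condensed v r' →
    compare (pos u r) (pos u r') = compare (pos v r) (pos v r')


def isXh : List (RLetter A) → Bool
  | .X _ :: _ => true
  | _ => false

def isYh : List (RLetter A) → Bool
  | .Y _ :: _ => true
  | _ => false

/-- Interval-local version of condensedness. -/
def CI (u : List A) : List (RLetter A) → ℕ → ℕ → Prop
  | [], i, j => i < j
  | .X a :: t, i, j => ∃ q, nextOcc u a i = some q ∧ q < j ∧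
      (if isYh t = true then CI u t i q else CI u t q j)
  | .Y a :: t, i, j => ∃ q, prevOcc u a j = some q ∧ i < q ∧
      (if isXh t = true then CI u t q j else CI u t i q)

theorem getLast_filter_range (P : ℕ → Bool) (N p : ℕ) :
    ((List.range N).filter P).getLast? = some p ↔
      p < N ∧ P p = true ∧ ∀ k, k < N → p < k → P k = false := by
  induction N with
  | zero => simp
  | succ N ih =>
    rw [List.range_succ, List.filter_append]
    by_cases h : P N = true
    · simp only [List.filter_cons, h, if_true, List.filter_nil]
      simp only [List.getLast?_append, List.getLast?_singleton, Option.some_or, Option.some.injEq]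
      constructor
      · rintro rfl
        exact ⟨by omega, h, fun k _ _ => by omega⟩
      · rintro ⟨h1, h2, h3⟩
        by_contra hne
        have := h3 N (by omega) (by omega)
        simp [h] at this
    · simp only [List.filter_cons, h, List.filter_nil]
      simp only [Bool.false_eq_true, if_false, List.append_nil]
      rw [ih]
      constructor
      · rintro ⟨h1, h2, h3⟩
        refine ⟨by omega, h2, fun k hk hpk => ?_⟩
        by_cases hkN : k = N
        · subst hkN; simpa using h
        · exact h3 k (by omega) hpk
      · rintro ⟨h1, h2, h3⟩
        have : p ≠ N := by rintro rfl; exact h h2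
        exact ⟨by omega, h2, fun k hk hpk => h3 k (by omega) hpk⟩

theorem get_lt {u : List A} {b : A} {k : ℕ} (h : u[k]? = some b) : k < u.length := by
  obtain ⟨h, _⟩ := List.getElem?_eq_some_iff.1 h
  exact h

theorem nextOcc_iff (u : List A) (a : A) (q p : ℕ) :
    nextOcc u a q = some p ↔
      q < p ∧ u[p-1]? = some a ∧ ∀ k, q < k → k < p → u[k-1]? ≠ some a := by
  unfold nextOcc
  rw [List.head?_filter, List.find?_range_eq_some]
  simp only [decide_eq_true_eq, List.mem_range, Bool.not_eq_true', decide_eq_false_iff_not]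
  constructor
  · rintro ⟨⟨h1, h2⟩, h3, h4⟩
    exact ⟨h1, h2, fun k hk hkp h => h4 k hkp ⟨hk, h⟩⟩
  · rintro ⟨h1, h2, h3⟩
    have := get_lt h2
    exact ⟨⟨h1, h2⟩, by omega, fun k hkp h => h3 k h.1 hkp h.2⟩

theorem prevOcc_iff (u : List A) (a : A) (q p : ℕ) :
    prevOcc u a q = some p ↔
      1 ≤ p ∧ p < q ∧ u[p-1]? = some a ∧ ∀ k, p < k → k < q → u[k-1]? ≠ some a := by
  unfold prevOcc
  rw [getLast_filter_range]
  simp only [decide_eq_true_eq, decide_eq_false_iff_not]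
  constructor
  · rintro ⟨h1, ⟨h2, h3, h4⟩, h5⟩
    refine ⟨h2, h3, h4, fun k hk hkq h => ?_⟩
    have := get_lt h
    exact h5 k (by omega) hk ⟨by omega, hkq, h⟩
  · rintro ⟨h1, h2, h3, h4⟩
    have := get_lt h3
    exact ⟨by omega, ⟨h1, h2, h3⟩, fun k hk hpk h => h4 k hpk h.2.1 h.2.2⟩

theorem nextOcc_ex (u : List A) (a : A) (i k : ℕ) (hk : i < k) (h : u[k-1]? = some a) :
    ∃ q, nextOcc u a i = some q ∧ q ≤ k := by
  have hex : ∃ n, i < n ∧ u[n-1]? = some a := ⟨k, hk, h⟩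
  refine ⟨Nat.find hex, ?_, Nat.find_min' hex ⟨hk, h⟩⟩
  rw [nextOcc_iff]
  exact ⟨(Nat.find_spec hex).1, (Nat.find_spec hex).2,
    fun m hm hlt hh => Nat.find_min hex hlt ⟨hm, hh⟩⟩

theorem prevOcc_ex (u : List A) (a : A) (j k : ℕ) (h1 : 1 ≤ k) (hk : k < j)
    (h : u[k-1]? = some a) : ∃ q, prevOcc u a j = some q ∧ k ≤ q := by
  have hP : k < j ∧ u[k-1]? = some a := ⟨hk, h⟩
  have hle := Nat.le_findGreatest (P := fun n => n < j ∧ u[n-1]? = some a) (n := j) hk.le hP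
  have hsp := Nat.findGreatest_spec (P := fun n => n < j ∧ u[n-1]? = some a) (n := j) hk.le hP
  refine ⟨_, ?_, hle⟩
  rw [prevOcc_iff]
  refine ⟨by omega, hsp.1, hsp.2, fun m hm hlt hh => ?_⟩
  exact Nat.findGreatest_is_greatest hm hlt.le ⟨hlt, hh⟩

theorem CI_lt (u : List A) : ∀ (r : List (RLetter A)) (i j : ℕ), CI u r i j → i < j
  | [], _, _, h => h
  | .X a :: t, i, j, ⟨q, h, hq, _⟩ => by rw [nextOcc_iff] at h; omega
  | .Y a :: t, i, j, ⟨q, h, hq, _⟩ => by rw [prevOcc_iff] at h; omega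

/-- Locality. -/
theorem CI_shift (u v : List A) (d : ℕ) (r : List (RLetter A)) : ∀ (i j : ℕ),
    (∀ k, i < k → k < j → u[k-1]? = v[k+d-1]?) → CI u r i j → CI v r (i+d) (j+d) := by
  induction r with
  | nil => intro i j _ h; simp only [CI] at *; omega
  | cons z t ih =>
    intro i j hag h
    cases z with
    | X a =>
      obtain ⟨q, h, hq, hc⟩ := h
      rw [nextOcc_iff] at h
      obtain ⟨h1, h2, h3⟩ := h
      refine ⟨q + d, ?_, by omega, ?_⟩
      · rw [nextOcc_iff]
        refine ⟨by omega, by rw [← hag q h1 hq]; exact h2, fun k hk hkq hh => ?_⟩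
        obtain ⟨k', rfl⟩ : ∃ k', k = k' + d := ⟨k - d, by omega⟩
        rw [← hag k' (by omega) (by omega)] at hh
        exact h3 k' (by omega) (by omega) hh
      · split_ifs at hc ⊢
        · exact ih _ _ (fun k h h' => hag k h (by omega)) hc
        · exact ih _ _ (fun k h h' => hag k (by omega) (by omega)) hc
    | Y a =>
      obtain ⟨q, h, hq, hc⟩ := h
      rw [prevOcc_iff] at h
      obtain ⟨h0, h1, h2, h3⟩ := h
      refine ⟨q + d, ?_, by omega, ?_⟩
      · rw [prevOcc_iff]
        refine ⟨by omega, by omega, by rw [← hag q hq h1]; exact h2, fun k hk hkq hh => ?_⟩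
        obtain ⟨k', rfl⟩ : ∃ k', k = k' + d := ⟨k - d, by omega⟩
        rw [← hag k' (by omega) (by omega)] at hh
        exact h3 k' (by omega) (by omega) hh
      · split_ifs at hc ⊢
        · exact ih _ _ (fun k h h' => hag k (by omega) (by omega)) hc
        · exact ih _ _ (fun k h h' => hag k (by omega) (by omega)) hc

theorem CI_unshift (u v : List A) (d : ℕ) (r : List (RLetter A)) : ∀ (i j : ℕ),
    (∀ k, i < k → k < j → u[k-1]? = v[k+d-1]?) → CI v r (i+d) (j+d) → CI u r i j := by
  induction r with
  | nil => intro i j _ h; simp only [CI] at *; omega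
  | cons z t ih =>
    intro i j hag h
    cases z with
    | X a =>
      obtain ⟨q, h, hq, hc⟩ := h
      rw [nextOcc_iff] at h
      obtain ⟨h1, h2, h3⟩ := h
      obtain ⟨q, rfl⟩ : ∃ k', q = k' + d := ⟨q - d, by omega⟩
      refine ⟨q, ?_, by omega, ?_⟩
      · rw [nextOcc_iff]
        refine ⟨by omega, by rw [hag q (by omega) (by omega)]; exact h2, fun k hk hkq hh => ?_⟩
        rw [hag k (by omega) (by omega)] at hh
        exact h3 (k + d) (by omega) (by omega) hh
      · split_ifs at hc ⊢
        · exact ih _ _ (fun k h h' => hag k h (by omega)) hc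
        · exact ih _ _ (fun k h h' => hag k (by omega) (by omega)) hc
    | Y a =>
      obtain ⟨q, h, hq, hc⟩ := h
      rw [prevOcc_iff] at h
      obtain ⟨h0, h1, h2, h3⟩ := h
      obtain ⟨q, rfl⟩ : ∃ k', q = k' + d := ⟨q - d, by omega⟩
      refine ⟨q, ?_, by omega, ?_⟩
      · rw [prevOcc_iff]
        refine ⟨by omega, by omega, by rw [hag q (by omega) (by omega)]; exact h2, fun k hk hkq hh => ?_⟩
        rw [hag k (by omega) (by omega)] at hh
        exact h3 (k + d) (by omega) (by omega) hh
      · split_ifs at hc ⊢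
        · exact ih _ _ (fun k h h' => hag k (by omega) (by omega)) hc
        · exact ih _ _ (fun k h h' => hag k (by omega) (by omega)) hc

theorem isYh_of {bs : List A} {t : List (RLetter A)} (hb : bs ≠ []) :
    isYh (bs.map RLetter.X ++ t) = false := by
  cases bs with
  | nil => exact absurd rfl hb
  | cons b bs => rfl

theorem isXh_of {bs : List A} {t : List (RLetter A)} (hb : bs ≠ []) :
    isXh (bs.map RLetter.Y ++ t) = false := by
  cases bs with
  | nil => exact absurd rfl hb
  | cons b bs => rfl

/-- Changing the right end for a ranker starting with an X-block. -/
theorem CI_X_block (u : List A) (t : List (RLetter A)) (ht : t = [] ∨ startsY t)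
    (j j' : ℕ) (hj : j ≤ j') (bs : List A) (hb : bs ≠ []) : ∀ i,
    (CI u (bs.map RLetter.X ++ t) i j ↔
      CI u (bs.map RLetter.X ++ t) i j' ∧ ∃ x, evalFrom u (bs.map RLetter.X) i = some x ∧ x < j) := by
  induction bs with
  | nil => exact absurd rfl hb
  | cons b bs ih =>
    intro i
    simp only [List.map_cons, List.cons_append, CI, evalFrom, stepR]
    by_cases hbs : bs = []
    · subst hbs
      simp only [List.map_nil, List.nil_append, evalFrom]
      rcases ht with rfl | ⟨c, s, rfl⟩
      · simp only [isYh, CI]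
        constructor
        · rintro ⟨q, h, hq, _⟩
          exact ⟨⟨q, h, by omega, by simp; omega⟩, q, by simp [h], hq⟩
        · rintro ⟨⟨q, h, hq, _⟩, x, hx, hxj⟩
          simp [h] at hx; subst hx
          exact ⟨q, h, hxj, by simpa using hxj⟩
      · simp only [isYh, if_true]
        constructor
        · rintro ⟨q, h, hq, hc⟩
          exact ⟨⟨q, h, by omega, hc⟩, q, by simp [h], hq⟩
        · rintro ⟨⟨q, h, hq, hc⟩, x, hx, hxj⟩
          simp [h] at hx; subst hx
          exact ⟨q, h, hxj, hc⟩
    · simp only [isYh_of hbs, Bool.false_eq_true, if_false]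
      constructor
      · rintro ⟨q, h, hq, hc⟩
        obtain ⟨h1, x, hx, hxj⟩ := (ih hbs q).1 hc
        exact ⟨⟨q, h, by omega, h1⟩, x, by simp [h, hx], hxj⟩
      · rintro ⟨⟨q, h, hq, hc⟩, x, hx, hxj⟩
        simp [h] at hx
        have := (ih hbs q).2 ⟨hc, x, hx, hxj⟩
        exact ⟨q, h, CI_lt _ _ _ _ this, this⟩

theorem CI_Y_block (u : List A) (t : List (RLetter A)) (ht : t = [] ∨ startsX t)
    (i i' : ℕ) (hi : i ≤ i') (bs : List A) (hb : bs ≠ []) : ∀ j,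
    (CI u (bs.map RLetter.Y ++ t) i' j ↔
      CI u (bs.map RLetter.Y ++ t) i j ∧ ∃ x, evalFrom u (bs.map RLetter.Y) j = some x ∧ i' < x) := by
  induction bs with
  | nil => exact absurd rfl hb
  | cons b bs ih =>
    intro j
    simp only [List.map_cons, List.cons_append, CI, evalFrom, stepR]
    by_cases hbs : bs = []
    · subst hbs
      simp only [List.map_nil, List.nil_append, evalFrom]
      rcases ht with rfl | ⟨c, s, rfl⟩
      · simp only [isXh, CI]
        constructor
        · rintro ⟨q, h, hq, _⟩
          exact ⟨⟨q, h, by omega, by simp; omega⟩, q, by simp [h], hq⟩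
        · rintro ⟨⟨q, h, hq, _⟩, x, hx, hxj⟩
          simp [h] at hx; subst hx
          exact ⟨q, h, hxj, by simpa using hxj⟩
      · simp only [isXh, if_true]
        constructor
        · rintro ⟨q, h, hq, hc⟩
          exact ⟨⟨q, h, by omega, hc⟩, q, by simp [h], hq⟩
        · rintro ⟨⟨q, h, hq, hc⟩, x, hx, hxj⟩
          simp [h] at hx; subst hx
          exact ⟨q, h, hxj, hc⟩
    · simp only [isXh_of hbs, Bool.false_eq_true, if_false]
      constructor
      · rintro ⟨q, h, hq, hc⟩
        obtain ⟨h1, x, hx, hxj⟩ := (ih hbs q).1 hc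
        exact ⟨⟨q, h, by omega, h1⟩, x, by simp [h, hx], hxj⟩
      · rintro ⟨⟨q, h, hq, hc⟩, x, hx, hxj⟩
        simp [h] at hx
        have := (ih hbs q).2 ⟨hc, x, hx, hxj⟩
        exact ⟨q, h, CI_lt _ _ _ _ this, this⟩

/-- Strictly increasing embedding of `bs` in the open interval `(i;j)`. -/
def Emb (u : List A) : List A → ℕ → ℕ → Prop
  | [], i, j => i < j
  | b :: bs, i, j => ∃ q, i < q ∧ u[q-1]? = some b ∧ Emb u bs q j

theorem Emb_mono (u : List A) (bs : List A) (i i' j : ℕ) (h : i' ≤ i) (he : Emb u bs i j) :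
    Emb u bs i' j := by
  cases bs with
  | nil => simp only [Emb] at *; omega
  | cons b bs =>
    obtain ⟨q, h1, h2⟩ := he
    exact ⟨q, by omega, h2⟩

theorem Emb_iff_X (u : List A) (bs : List A) (j : ℕ) : ∀ i,
    Emb u bs i j ↔ ∃ x, evalFrom u (bs.map RLetter.X) i = some x ∧ x < j := by
  induction bs with
  | nil => intro i; simp [Emb, evalFrom]
  | cons b bs ih =>
    intro i
    simp only [Emb, List.map_cons, evalFrom, stepR]
    constructor
    · rintro ⟨q, h1, h2, h3⟩
      obtain ⟨q', hq', hle⟩ := nextOcc_ex u b i q h1 h2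
      obtain ⟨x, hx, hxj⟩ := (ih q').1 (Emb_mono _ _ _ _ _ hle h3)
      exact ⟨x, by simp [hq', hx], hxj⟩
    · rintro ⟨x, hx, hxj⟩
      rw [Option.bind_eq_some_iff] at hx
      obtain ⟨q, hq, hx⟩ := hx
      rw [nextOcc_iff] at hq
      exact ⟨q, hq.1, hq.2.1, (ih q).2 ⟨x, hx, hxj⟩⟩

theorem evalFrom_append (u : List A) (r s : List (RLetter A)) : ∀ q,
    evalFrom u (r ++ s) q = (evalFrom u r q).bind (evalFrom u s) := by
  induction r with
  | nil => intro q; simp [evalFrom]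
  | cons z t ih =>
    intro q
    simp only [List.cons_append, evalFrom]
    rw [Option.bind_assoc]
    congr 1
    funext x
    exact ih x

theorem Emb_iff_Y (u : List A) (bs : List A) (j : ℕ) : ∀ i,
    Emb u bs i j ↔ ∃ x, evalFrom u (bs.reverse.map RLetter.Y) j = some x ∧ i < x := by
  induction bs with
  | nil => intro i; simp [Emb, evalFrom]
  | cons b bs ih =>
    intro i
    simp only [Emb, List.reverse_cons, List.map_append, evalFrom_append]
    constructor
    · rintro ⟨q, h1, h2, h3⟩
      obtain ⟨x, hx, hqx⟩ := (ih q).1 h3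
      obtain ⟨y, hy, hqy⟩ := prevOcc_ex u b x q (by omega) hqx h2
      exact ⟨y, by rw [hx]; simp [evalFrom, stepR, hy], by omega⟩
    · rintro ⟨x, hx, hxj⟩
      rw [Option.bind_eq_some_iff] at hx
      obtain ⟨q, hq, hx⟩ := hx
      simp [evalFrom, stepR] at hx
      rw [prevOcc_iff] at hx
      exact ⟨x, hxj, hx.2.2.1, (ih x).2 ⟨q, hq, hx.2.1⟩⟩

theorem CI_mem (u : List A) (r : List (RLetter A)) : ∀ i j, CI u r i j →
    ∀ b, (RLetter.X b ∈ r ∨ RLetter.Y b ∈ r) → ∃ k : ℕ, u[k]? = some b := by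
  induction r with
  | nil => intro i j _ b h; simp at h
  | cons z t ih =>
    intro i j hc b h
    cases z with
    | X c =>
      obtain ⟨q, hq, _, hc⟩ := hc
      rw [nextOcc_iff] at hq
      by_cases hcb : b = c
      · subst hcb; exact ⟨_, hq.2.1⟩
      · have h' : RLetter.X b ∈ t ∨ RLetter.Y b ∈ t := by simpa [hcb] using h
        split_ifs at hc
        · exact ih _ _ hc b h'
        · exact ih _ _ hc b h'
    | Y c =>
      obtain ⟨q, hq, _, hc⟩ := hc
      rw [prevOcc_iff] at hq
      by_cases hcb : b = c
      · subst hcb; exact ⟨_, hq.2.2.1⟩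
      · have h' : RLetter.X b ∈ t ∨ RLetter.Y b ∈ t := by simpa [hcb] using h
        split_ifs at hc
        · exact ih _ _ hc b h'
        · exact ih _ _ hc b h'

/-! ### Condensed versus CI -/

def Upd (u : List A) (z w : RLetter A) (i j i' j' : ℕ) : Prop :=
  (match z, w with
  | .X a, .X _ => nextOcc u a i = some i' ∧ j' = j
  | .Y a, .Y _ => i' = i ∧ prevOcc u a j = some j'
  | .X a, .Y _ => i' = i ∧ nextOcc u a i = some j'
  | .Y a, .X _ => prevOcc u a j = some i' ∧ j' = j) ∧
  i ≤ i' ∧ j' ≤ j ∧ (i < i' ∨ j' < j)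

def st (z : RLetter A) (i j : ℕ) : ℕ :=
  match z with
  | .X _ => i
  | .Y _ => j

def CondI (u : List A) (z : RLetter A) (t : List (RLetter A)) (i0 j0 : ℕ) : Prop :=
  ∃ (p : ℕ) (i j : ℕ → ℕ), evalFrom u (z :: t) (st z i0 j0) = some p ∧ i 0 = i0 ∧ j 0 = j0 ∧
    (∀ (l : ℕ) x y, (z :: t)[l]? = some x → (z :: t)[l+1]? = some y →
      Upd u x y (i l) (j l) (i (l+1)) (j (l+1))) ∧
    i t.length < p ∧ p < j t.length

theorem condensed_condI (u : List A) (z : RLetter A) (t : List (RLetter A)) :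
    Condensed u (z :: t) ↔ CondI u z t 0 (u.length + 1) := by
  have hst : startPos u z = st z 0 (u.length + 1) := by cases z <;> rfl
  constructor
  · rintro ⟨p, i, j, he, hi, hj, hXX, hYY, hXY, hYX, hn, h1, h2⟩
    refine ⟨p, i, j, ?_, hi, hj, ?_, by simpa using h1, by simpa using h2⟩
    · rw [← hst]; exact he
    · intro l x y hx hy
      refine ⟨?_, hn (l+1) (by omega) (get_lt hy)⟩
      cases x with
      | X a => cases y with
        | X b => exact hXX (l+1) a b (by omega) hx hy
        | Y b => exact hXY (l+1) a b (by omega) hx hy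
      | Y a => cases y with
        | X b => exact hYX (l+1) a b (by omega) hx hy
        | Y b => exact hYY (l+1) a b (by omega) hx hy
  · rintro ⟨p, i, j, he, hi, hj, hU, h1, h2⟩
    refine ⟨p, i, j, ?_, hi, hj, ?_, ?_, ?_, ?_, ?_, by simpa using h1, by simpa using h2⟩
    · rw [← hst] at he; exact he
    iterate 4
      intro l a b hl hx hy
      obtain ⟨l, rfl⟩ : ∃ m, l = m + 1 := ⟨l - 1, by omega⟩
      exact (hU l _ _ hx hy).1
    · intro l hl hlt
      obtain ⟨l, rfl⟩ : ∃ m, l = m + 1 := ⟨l - 1, by omega⟩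
      exact (hU l _ _ (List.getElem?_eq_getElem (by omega)) (List.getElem?_eq_getElem hlt)).2

theorem condI_cons (u : List A) (z w : RLetter A) (t : List (RLetter A)) (i0 j0 : ℕ) :
    CondI u z (w :: t) i0 j0 ↔ ∃ i1 j1, Upd u z w i0 j0 i1 j1 ∧ CondI u w t i1 j1 := by
  have key : ∀ i1 j1, Upd u z w i0 j0 i1 j1 → evalFrom u (z :: w :: t) (st z i0 j0) =
      evalFrom u (w :: t) (st w i1 j1) := by
    intro i1 j1 h
    rw [evalFrom]
    cases z <;> cases w <;> simp [Upd] at h <;> simp [st, stepR, h]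
  constructor
  · rintro ⟨p, i, j, he, hi, hj, hU, h1, h2⟩
    have h0 := hU 0 z w rfl rfl
    rw [hi, hj] at h0
    refine ⟨_, _, h0, p, fun n => i (n+1), fun n => j (n+1), ?_, rfl, rfl, ?_, h1, h2⟩
    · rw [← key _ _ h0]; exact he
    · intro l x y hx hy
      exact hU (l+1) x y hx hy
  · rintro ⟨i1, j1, hu, p, i, j, he, hi, hj, hU, h1, h2⟩
    refine ⟨p, fun n => Nat.casesOn n i0 i, fun n => Nat.casesOn n j0 j, ?_, rfl, rfl, ?_, h1, h2⟩
    · rw [key _ _ hu]; exact he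
    · intro l x y hx hy
      cases l with
      | zero =>
        simp at hx hy
        subst hx; subst hy; subst hi; subst hj
        exact hu
      | succ l => exact hU l x y hx hy

theorem condI_CI (u : List A) (t : List (RLetter A)) : ∀ (z : RLetter A) (i j : ℕ),
    CondI u z t i j ↔ CI u (z :: t) i j := by
  induction t with
  | nil =>
    intro z i j
    have : CondI u z [] i j ↔ ∃ p, stepR u z (st z i j) = some p ∧ i < p ∧ p < j := by
      constructor
      · rintro ⟨p, i', j', he, rfl, rfl, _, h1, h2⟩
        exact ⟨p, by simpa [evalFrom] using he, h1, h2⟩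
      · rintro ⟨p, he, h1, h2⟩
        exact ⟨p, fun _ => i, fun _ => j, by simpa [evalFrom] using he, rfl, rfl,
          by intro l x y hx hy; simp at hy, h1, h2⟩
    rw [this]
    cases z with
    | X a =>
      simp only [stepR, st, CI, isYh]
      constructor
      · rintro ⟨p, he, h1, h2⟩
        exact ⟨p, he, h2, by simpa using h2⟩
      · rintro ⟨p, he, h1, h2⟩
        exact ⟨p, he, ((nextOcc_iff _ _ _ _).1 he).1, h1⟩
    | Y a =>
      simp only [stepR, st, CI, isXh]
      constructor
      · rintro ⟨p, he, h1, h2⟩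
        exact ⟨p, he, h1, by simpa using h1⟩
      · rintro ⟨p, he, h1, h2⟩
        exact ⟨p, he, h1, ((prevOcc_iff _ _ _ _).1 he).2.1⟩
  | cons w t ih =>
    intro z i j
    rw [condI_cons]
    cases z with
    | X a =>
      cases w with
      | X b =>
        rw [CI]
        simp only [Upd, isYh, Bool.false_eq_true, if_false]
        constructor
        · rintro ⟨i1, j1, ⟨⟨h, rfl⟩, _⟩, hc⟩
          rw [ih] at hc
          exact ⟨i1, h, CI_lt _ _ _ _ hc, hc⟩
        · rintro ⟨q, h, hq, hc⟩
          have := ((nextOcc_iff _ _ _ _).1 h).1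
          exact ⟨q, j, ⟨⟨h, rfl⟩, by omega, by omega, by omega⟩, (ih _ _ _).2 hc⟩
      | Y b =>
        rw [CI]
        simp only [Upd, isYh, if_true]
        constructor
        · rintro ⟨i1, j1, ⟨⟨rfl, h⟩, h1⟩, hc⟩
          rw [ih] at hc
          exact ⟨j1, h, by omega, hc⟩
        · rintro ⟨q, h, hq, hc⟩
          exact ⟨i, q, ⟨⟨rfl, h⟩, by omega, by omega, by omega⟩, (ih _ _ _).2 hc⟩
    | Y a =>
      cases w with
      | Y b =>
        rw [CI]
        simp only [Upd, isXh, Bool.false_eq_true, if_false]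
        constructor
        · rintro ⟨i1, j1, ⟨⟨rfl, h⟩, _⟩, hc⟩
          rw [ih] at hc
          exact ⟨j1, h, CI_lt _ _ _ _ hc, hc⟩
        · rintro ⟨q, h, hq, hc⟩
          have := ((prevOcc_iff _ _ _ _).1 h).2.1
          exact ⟨i, q, ⟨⟨rfl, h⟩, by omega, by omega, by omega⟩, (ih _ _ _).2 hc⟩
      | X b =>
        rw [CI]
        simp only [Upd, isXh, if_true]
        constructor
        · rintro ⟨i1, j1, ⟨⟨h, rfl⟩, h1⟩, hc⟩
          rw [ih] at hc
          exact ⟨i1, h, by omega, hc⟩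
        · rintro ⟨q, h, hq, hc⟩
          exact ⟨q, j, ⟨⟨h, rfl⟩, by omega, by omega, by omega⟩, (ih _ _ _).2 hc⟩

theorem condensed_iff (u : List A) (r : List (RLetter A)) (hr : r ≠ []) :
    Condensed u r ↔ CI u r 0 (u.length + 1) := by
  cases r with
  | nil => exact absurd rfl hr
  | cons z t => rw [condensed_condI, condI_CI]

theorem CI_defined (u : List A) (r : List (RLetter A)) (hr : r ≠ [])
    (h : CI u r 0 (u.length + 1)) : Defined u r := by
  rw [← condensed_iff u r hr] at h
  obtain ⟨p, i, j, he, _⟩ := h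
  simp [Defined, he]

theorem get_um (a : A) (um up : List A) (k : ℕ) (h1 : 0 < k) (h2 : k < um.length + 1) :
    um[k-1]? = (um ++ a :: up)[k + 0 - 1]? := by
  rw [List.getElem?_append_left (by omega)]; rfl

theorem get_up (a : A) (um up : List A) (k : ℕ) (h1 : 0 < k) :
    up[k-1]? = (um ++ a :: up)[k + (um.length + 1) - 1]? := by
  rw [List.getElem?_append_right (by omega)]
  obtain ⟨k, rfl⟩ : ∃ m, k = m + 1 := ⟨k - 1, by omega⟩
  rw [show k + 1 + (um.length + 1) - 1 - um.length = k + 1 by omega, List.getElem?_cons_succ]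
  rfl

theorem CI_um (a : A) (um up : List A) (r : List (RLetter A)) :
    CI um r 0 (um.length + 1) ↔ CI (um ++ a :: up) r 0 (um.length + 1) :=
  ⟨fun h => CI_shift um _ 0 r 0 _ (fun k h1 h2 => get_um a um up k h1 h2) h,
   fun h => CI_unshift um (um ++ a :: up) 0 r 0 _ (fun k h1 h2 => get_um a um up k h1 h2) h⟩

theorem CI_up (a : A) (um up : List A) (r : List (RLetter A)) :
    CI up r 0 (up.length + 1) ↔
      CI (um ++ a :: up) r (um.length + 1) ((um ++ a :: up).length + 1) := by
  have e : (um ++ a :: up).length + 1 = up.length + 1 + (um.length + 1) := by simp; omega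
  have e' : um.length + 1 = 0 + (um.length + 1) := by omega
  rw [e]
  constructor
  · intro h
    have := CI_shift up (um ++ a :: up) (um.length + 1) r 0 _ (fun k h1 h2 => get_up a um up k h1) h
    rwa [← e'] at this
  · intro h
    apply CI_unshift up (um ++ a :: up) (um.length + 1) r 0 _ (fun k h1 h2 => get_up a um up k h1)
    rwa [← e']

theorem next_a (a : A) (um up : List A) (hnot : a ∉ um) :
    nextOcc (um ++ a :: up) a 0 = some (um.length + 1) := by
  rw [nextOcc_iff]
  refine ⟨by omega, by simp, fun k h1 h2 h => hnot ?_⟩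
  rw [List.getElem?_append_left (by omega)] at h
  exact List.mem_of_getElem? h

theorem splitX (r : List (RLetter A)) : ∃ (bs : List A) (t : List (RLetter A)),
    r = bs.map RLetter.X ++ t ∧ (t = [] ∨ startsY t) := by
  induction r with
  | nil => exact ⟨[], [], rfl, Or.inl rfl⟩
  | cons z t ih =>
    obtain ⟨bs, s, rfl, hs⟩ := ih
    cases z with
    | X b => exact ⟨b :: bs, s, rfl, hs⟩
    | Y b => exact ⟨[], _, rfl, Or.inr ⟨b, _, rfl⟩⟩

theorem splitY (r : List (RLetter A)) : ∃ (bs : List A) (t : List (RLetter A)),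
    r = bs.map RLetter.Y ++ t ∧ (t = [] ∨ startsX t) := by
  induction r with
  | nil => exact ⟨[], [], rfl, Or.inl rfl⟩
  | cons z t ih =>
    obtain ⟨bs, s, rfl, hs⟩ := ih
    cases z with
    | Y b => exact ⟨b :: bs, s, rfl, hs⟩
    | X b => exact ⟨[], _, rfl, Or.inr ⟨b, _, rfl⟩⟩

theorem Emb_um (a : A) (um up bs : List A) (j : ℕ) : ∀ i, Emb um bs i j →
    Emb (um ++ a :: up) bs i j := by
  induction bs with
  | nil => exact fun i h => h
  | cons b bs ih =>
    rintro i ⟨q, h1, h2, h3⟩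
    refine ⟨q, h1, ?_, ih _ h3⟩
    rw [List.getElem?_append_left (get_lt h2)]
    exact h2

theorem evalX_le (u : List A) (bs : List A) (hb : bs ≠ []) : ∀ i x,
    evalFrom u (bs.map RLetter.X) i = some x → x < u.length + 1 := by
  induction bs with
  | nil => exact absurd rfl hb
  | cons b bs ih =>
    intro i x h
    simp only [List.map_cons, evalFrom, stepR] at h
    rw [Option.bind_eq_some_iff] at h
    obtain ⟨q, hq, hx⟩ := h
    by_cases hbs : bs = []
    · subst hbs
      simp [evalFrom] at hx
      rw [nextOcc_iff] at hq
      have := get_lt hq.2.1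
      omega
    · exact ih hbs _ _ hx

theorem evalY_up (a : A) (um up bs : List A) (hb : bs ≠ []) : ∀ j x,
    evalFrom up (bs.map RLetter.Y) j = some x →
    1 ≤ x ∧ evalFrom (um ++ a :: up) (bs.map RLetter.Y) (j + (um.length + 1)) =
      some (x + (um.length + 1)) := by
  induction bs with
  | nil => exact absurd rfl hb
  | cons b bs ih =>
    intro j x h
    simp only [List.map_cons, evalFrom, stepR] at h ⊢
    rw [Option.bind_eq_some_iff] at h
    obtain ⟨q, hq, hx⟩ := h
    have hq' : prevOcc (um ++ a :: up) b (j + (um.length + 1)) = some (q + (um.length + 1)) := by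
      rw [prevOcc_iff] at hq ⊢
      obtain ⟨h0, h1, h2, h3⟩ := hq
      refine ⟨by omega, by omega, by rw [← get_up a um up q h0]; exact h2, fun k hk hkq hh => ?_⟩
      obtain ⟨k', rfl⟩ : ∃ k', k = k' + (um.length + 1) := ⟨k - (um.length + 1), by omega⟩
      rw [← get_up a um up k' (by omega)] at hh
      exact h3 k' (by omega) (by omega) hh
    rw [hq', Option.bind_some]
    by_cases hbs : bs = []
    · subst hbs
      simp [evalFrom] at hx ⊢
      rw [prevOcc_iff] at hq
      omega
    · exact ih hbs _ _ hx

theorem defined_prefix {u : List A} {r s : List (RLetter A)} {q : ℕ}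
    (h : (evalFrom u (r ++ s) q).isSome) : ∃ x, evalFrom u r q = some x := by
  rw [evalFrom_append] at h
  cases hx : evalFrom u r q with
  | none => simp [hx] at h
  | some x => exact ⟨x, rfl⟩

/-- Basics on rankers and the `a`-left factorization `u = um ++ a :: up`
(with `a ∉ alph um`). -/
theorem statement2 (a : A) (r : List (RLetter A)) (hr : r ≠ [])
    (um up : List A) (hnot : a ∉ um) :
    (startsX r →
      ((Condensed up r ↔ Condensed (um ++ a :: up) (RLetter.X a :: r)) ∧
       (Condensed um r ↔ (Defined um r ∧ Condensed (um ++ a :: up) r)) ∧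
       (∀ (bs : List A) (t : List (RLetter A)), bs ≠ [] →
          r = bs.map RLetter.X ++ t → (t = [] ∨ startsY t) →
          (Condensed um r ↔
            (Condensed (um ++ a :: up) r ∧ RLetter.X a ∉ r ∧ RLetter.Y a ∉ r ∧
             Defined (um ++ a :: up) (RLetter.X a :: bs.reverse.map RLetter.Y)))))) ∧
    (startsY r →
      ((Condensed um r ↔ Condensed (um ++ a :: up) (RLetter.X a :: r)) ∧
       (Condensed up r ↔ (Defined up r ∧ Condensed (um ++ a :: up) r)) ∧
       (∀ (bs : List A) (t : List (RLetter A)), bs ≠ [] →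
          r = bs.map RLetter.Y ++ t → (t = [] ∨ startsX t) →
          (Condensed up r ↔
            (Condensed (um ++ a :: up) r ∧
             Defined (um ++ a :: up) (bs.map RLetter.Y ++ [RLetter.Y a])))))) := by
  have hXr : RLetter.X a :: r ≠ [] := by simp
  have hle : um.length + 1 ≤ (um ++ a :: up).length + 1 := by simp
  rw [condensed_iff um r hr, condensed_iff up r hr, condensed_iff _ r hr, condensed_iff _ _ hXr,
    CI_up a um up r]
  constructor
  · rintro hs
    have hY : isYh r = false := by obtain ⟨b, t, rfl⟩ := hs; rfl
    refine ⟨?_, ?_, ?_⟩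
    · rw [CI]
      simp only [next_a a um up hnot, hY, Bool.false_eq_true, if_false]
      constructor
      · intro h
        exact ⟨_, rfl, CI_lt _ _ _ _ h, h⟩
      · rintro ⟨q, h, _, hc⟩
        simp at h; subst h; exact hc
    · obtain ⟨bs, t, rfl, ht⟩ := splitX r
      have hb : bs ≠ [] := by
        rintro rfl
        obtain ⟨b, s, hs⟩ := hs
        rcases ht with rfl | ⟨c, s', rfl⟩ <;> simp at hs
      constructor
      · intro h
        refine ⟨CI_defined _ _ hr h, ?_⟩
        rw [CI_um a um up] at h
        exact ((CI_X_block _ t ht _ _ hle bs hb 0).1 h).1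
      · rintro ⟨hd, hc⟩
        rw [CI_um a um up, CI_X_block _ t ht _ _ hle bs hb 0]
        refine ⟨hc, ?_⟩
        rw [← Emb_iff_X]
        apply Emb_um
        rw [Emb_iff_X]
        have hd' : (evalFrom um (bs.map RLetter.X ++ t) 0).isSome := by
          cases bs with
          | nil => exact absurd rfl hb
          | cons b bs => exact hd
        obtain ⟨x, hx⟩ := defined_prefix hd'
        exact ⟨x, hx, evalX_le _ _ hb _ _ hx⟩
    · rintro bs t hb rfl ht
      have hD : Defined (um ++ a :: up) (RLetter.X a :: bs.reverse.map RLetter.Y) ↔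
          ∃ x, evalFrom (um ++ a :: up) (bs.map RLetter.X) 0 = some x ∧ x < um.length + 1 := by
        rw [← Emb_iff_X, Emb_iff_Y]
        simp only [Defined, evalR, evalFrom, stepR, startPos, next_a a um up hnot, Option.bind_some]
        rw [Option.isSome_iff_exists]
        constructor
        · rintro ⟨x, hx⟩
          refine ⟨x, hx, ?_⟩
          obtain ⟨c, cs, hcs⟩ : ∃ c cs, bs = c :: cs := List.exists_cons_of_ne_nil hb
          subst hcs
          rw [List.reverse_cons, List.map_append, evalFrom_append, Option.bind_eq_some_iff] at hx
          obtain ⟨q, _, hq⟩ := hx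
          simp [evalFrom, stepR] at hq
          rw [prevOcc_iff] at hq
          omega
        · rintro ⟨x, hx, _⟩
          exact ⟨x, hx⟩
      rw [hD]
      constructor
      · intro h
        have hm := CI_mem _ _ _ _ h
        have hna : ∀ k : ℕ, um[k]? ≠ some a := fun k hk => hnot (List.mem_of_getElem? hk)
        rw [CI_um a um up, CI_X_block _ t ht _ _ hle bs hb 0] at h
        refine ⟨h.1, ?_, ?_, h.2⟩
        · intro hh; obtain ⟨k, hk⟩ := hm a (Or.inl hh); exact hna k hk
        · intro hh; obtain ⟨k, hk⟩ := hm a (Or.inr hh); exact hna k hk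
      · rintro ⟨h1, _, _, h2⟩
        rw [CI_um a um up, CI_X_block _ t ht _ _ hle bs hb 0]
        exact ⟨h1, h2⟩
  · rintro hs
    have hY : isYh r = true := by obtain ⟨b, t, rfl⟩ := hs; rfl
    have hlen : (um ++ a :: up).length + 1 = up.length + 1 + (um.length + 1) := by simp; omega
    refine ⟨?_, ?_, ?_⟩
    · rw [CI, CI_um a um up]
      simp only [next_a a um up hnot, hY, if_true]
      constructor
      · intro h
        exact ⟨_, rfl, by simp, h⟩
      · rintro ⟨q, h, _, hc⟩
        simp at h; subst h; exact hc
    · obtain ⟨bs, t, rfl, ht⟩ := splitY r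
      have hb : bs ≠ [] := by
        rintro rfl
        obtain ⟨b, s, hs⟩ := hs
        rcases ht with rfl | ⟨c, s', rfl⟩ <;> simp at hs
      constructor
      · intro h
        refine ⟨CI_defined _ _ hr ((CI_up a um up _).2 h), ?_⟩
        exact ((CI_Y_block _ t ht 0 _ (Nat.zero_le _) bs hb _).1 h).1
      · rintro ⟨hd, hc⟩
        rw [CI_Y_block _ t ht 0 _ (Nat.zero_le _) bs hb _]
        refine ⟨hc, ?_⟩
        have hd' : (evalFrom up (bs.map RLetter.Y ++ t) (up.length + 1)).isSome := by
          cases bs with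
          | nil => exact absurd rfl hb
          | cons b bs => exact hd
        obtain ⟨x, hx⟩ := defined_prefix hd'
        obtain ⟨h1, h2⟩ := evalY_up a um up bs hb _ _ hx
        rw [hlen]
        exact ⟨_, h2, by omega⟩
    · rintro bs t hb rfl ht
      rw [CI_Y_block _ t ht 0 _ (Nat.zero_le _) bs hb _]
      have hD : Defined (um ++ a :: up) (bs.map RLetter.Y ++ [RLetter.Y a]) ↔
          (evalFrom (um ++ a :: up) (bs.map RLetter.Y ++ [RLetter.Y a])
            ((um ++ a :: up).length + 1)).isSome := by
        cases bs with
        | nil => exact absurd rfl hb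
        | cons b bs => exact Iff.rfl
      rw [hD, evalFrom_append, Option.isSome_iff_exists]
      have hna := (nextOcc_iff _ _ _ _).1 (next_a a um up hnot)
      apply and_congr_right
      intro _
      constructor
      · rintro ⟨x, hx, hlt⟩
        obtain ⟨q, hq, _⟩ := prevOcc_ex (um ++ a :: up) a x (um.length + 1) (by omega) hlt hna.2.1
        exact ⟨q, by rw [hx]; simp [evalFrom, stepR, hq]⟩
      · rintro ⟨q, hq⟩
        rw [Option.bind_eq_some_iff] at hq
        obtain ⟨x, hx, hq⟩ := hq
        simp [evalFrom, stepR] at hq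
        rw [prevOcc_iff] at hq
        refine ⟨x, hx, ?_⟩
        by_contra hcon
        exact hna.2.2 q (by omega) (by omega) hq.2.2.1

end RankerPaper
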